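/- Let n be a positive integer and m₁, …, mₙ integers with 2 ≤ mᵢ ≤ m for all i. Then r₃(ℤ_{m₁} × ⋯ × ℤ_{mₙ}) ≥ (7/24)^(n/2) / (10⁶ m² n³) · m₁⋯mₙ, where r₃(G) is the maximum size of a subset of the finite abelian group G containing no three distinct elements x, y, z with x + z = 2y. -/

import Mathlib

/-- The maximum size of a subset of an abelian group containing no three
distinct elements `x, y, z` with `x + z = y + y`. -/
noncomputable def r3 (G : Type*) [AddCommGroup G] : ℕ :=
  sSup {n : ℕ | ∃ A : Finset G,
    (∀ x ∈ A, ∀ y ∈ A, ∀ z ∈ A, x ≠ y → y ≠ z → x ≠ z → x + z ≠ y + y) ∧ A.card = n}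

open Set MeasureTheory

/-- Height of the fibre of the planar region over the left strip. -/
noncomputable def lowerHeight (x : ℝ) : ℝ := min (1 / 2) (1 / 6 + x)

/-- Half of the length of the fibre of the planar region over the right strip. -/
noncomputable def upperHeight (x : ℝ) : ℝ := min (1 / 4) (5 / 6 - x)

/-- A planar region, read modulo `ℤ²`, of area at least `7 / 24 - ε / 2`. -/
def InRegion (ε x y : ℝ) : Prop :=
  (0 ≤ x ∧ x < 1 / 2 - ε ∧ 0 ≤ y ∧ y < lowerHeight x) ∨
  (1 / 2 ≤ x ∧ x < 3 / 4 ∧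
    ((1 / 2 - upperHeight x ≤ y ∧ y < 1 / 2) ∨ (1 - upperHeight x ≤ y ∧ y < 1)))

/-- The second coordinate, reduced modulo `1 / 2` over the right strip. -/
noncomputable def foldedHeight (x y : ℝ) : ℝ := if x < 1 / 2 ∨ y < 1 / 2 then y else y - 1 / 2

/-- The weight which is convex along progressions in the region. -/
noncomputable def weight (C x y : ℝ) : ℝ := C * x ^ 2 + foldedHeight x y ^ 2

lemma InRegion.cases {ε x y : ℝ} (hε : 0 ≤ ε) (h : InRegion ε x y) :
    (0 ≤ x ∧ x < 1 / 2 - ε ∧ 0 ≤ y ∧ y < 1 / 2 ∧ y < 1 / 6 + x ∧ foldedHeight x y = y) ∨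
    (1 / 2 ≤ x ∧ x < 3 / 4 ∧ 1 / 4 ≤ foldedHeight x y ∧ foldedHeight x y < 1 / 2 ∧
      x - 1 / 3 ≤ foldedHeight x y ∧
      ∃ s : ℤ, (s = 0 ∨ s = 1) ∧ y = foldedHeight x y + s / 2) := by
  have hl : lowerHeight x ≤ 1 / 2 ∧ lowerHeight x ≤ 1 / 6 + x :=
    ⟨min_le_left _ _, min_le_right _ _⟩
  have hu : upperHeight x ≤ 1 / 4 ∧ upperHeight x ≤ 5 / 6 - x :=
    ⟨min_le_left _ _, min_le_right _ _⟩
  rcases h with ⟨h0, h1, h2, h3⟩ | ⟨h0, h1, h2 | h2⟩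
  · left
    refine ⟨h0, h1, h2, by linarith, by linarith, if_pos (Or.inl (by linarith))⟩
  · right
    have : foldedHeight x y = y := if_pos (Or.inr h2.2)
    rw [this]
    exact ⟨h0, h1, by linarith, by linarith, by linarith, 0, Or.inl rfl, by simp⟩
  · right
    have : foldedHeight x y = y - 1 / 2 := if_neg (by push Not; constructor <;> linarith)
    rw [this]
    exact ⟨h0, h1, by linarith, by linarith, by linarith, 1, Or.inr rfl, by push_cast; ring⟩

lemma InRegion.weight_mem {ε x y C : ℝ} (hε : 0 ≤ ε) (hC : 0 ≤ C) (h : InRegion ε x y) :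
    0 ≤ weight C x y ∧ weight C x y ≤ C + 1 := by
  refine ⟨by unfold weight; positivity, ?_⟩
  have key : 0 ≤ x ∧ x ≤ 1 ∧ 0 ≤ foldedHeight x y ∧ foldedHeight x y ≤ 1 := by
    rcases h.cases hε with ⟨h0, h1, h2, h3, -, h5⟩ | ⟨h0, h1, h2, h3, -⟩
    · rw [h5]; refine ⟨?_, ?_, ?_, ?_⟩ <;> linarith
    · refine ⟨?_, ?_, ?_, ?_⟩ <;> linarith
  obtain ⟨a, b, c, d⟩ := key
  have h1 : x ^ 2 ≤ 1 := pow_le_one₀ a b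
  have h2 : foldedHeight x y ^ 2 ≤ 1 := pow_le_one₀ c d
  unfold weight
  nlinarith

/-- Second differences of the weight along a progression in the region: either they are bounded
below by a constant, or they control the difference of the end points. -/
lemma weight_progression {ε C x₁ y₁ x₂ y₂ x₃ y₃ : ℝ} (hε : 0 < ε) (hε6 : ε ≤ 1 / 6)
    (hC : 2 ≤ C * ε ^ 2)
    (h₁ : InRegion ε x₁ y₁) (h₂ : InRegion ε x₂ y₂) (h₃ : InRegion ε x₃ y₃) {k l : ℤ}
    (hk : x₁ + x₃ - 2 * x₂ = k) (hl : y₁ + y₃ - 2 * y₂ = l) :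
    1 / 8 ≤ weight C x₁ y₁ + weight C x₃ y₃ - 2 * weight C x₂ y₂ ∨
    ∃ s : ℤ, weight C x₁ y₁ + weight C x₃ y₃ - 2 * weight C x₂ y₂ =
        C / 2 * (x₁ - x₃) ^ 2 + 1 / 2 * (y₁ - y₃ + s / 2) ^ 2 ∧
      (x₁ = x₃ → y₁ - y₃ + s / 2 = 0 → y₁ = y₃) := by
  have hC2 : 2 ≤ C := by
    have : 0 ≤ C := by
      by_contra hneg
      have : C * ε ^ 2 ≤ 0 := mul_nonpos_of_nonpos_of_nonneg (by linarith) (by positivity)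
      linarith
    nlinarith
  have hpos : ∀ (k : ℤ) (a : ℝ), a = k → -1 < a → a < 1 → a = 0 := by
    intro k a h h1 h2
    rw [h] at h1 h2 ⊢
    have : k = 0 := by
      have h1' : -1 < k := by exact_mod_cast h1
      have h2' : k < 1 := by exact_mod_cast h2
      omega
    simp [this]
  have mixed : ∀ r₁ r₂ r₃ : ℝ, 0 ≤ r₁ → 0 ≤ r₂ → r₂ ≤ 1 / 2 → 0 ≤ r₃ →
      (1 ≤ C * (x₁ ^ 2 + x₃ ^ 2 - 2 * x₂ ^ 2)) →
      1 / 8 ≤ C * x₁ ^ 2 + r₁ ^ 2 + (C * x₃ ^ 2 + r₃ ^ 2) - 2 * (C * x₂ ^ 2 + r₂ ^ 2) := by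
    intro r₁ r₂ r₃ _ _ _ _ h
    nlinarith [sq_nonneg r₁, sq_nonneg r₃]
  have gap : x₁ + x₃ - 2 * x₂ = 0 → ε ≤ |x₁ - x₃| →
      1 ≤ C * (x₁ ^ 2 + x₃ ^ 2 - 2 * x₂ ^ 2) := by
    intro h0 h
    have : x₂ = (x₁ + x₃) / 2 := by linarith
    have h2 : ε ^ 2 ≤ (x₁ - x₃) ^ 2 := by
      rw [← sq_abs (x₁ - x₃)]; exact pow_le_pow_left₀ hε.le h 2
    have e : x₁ ^ 2 + x₃ ^ 2 - 2 * x₂ ^ 2 = (x₁ - x₃) ^ 2 / 2 := by rw [this]; ring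
    rw [e]; nlinarith
  have wrap : 0 ≤ x₂ → x₁ + x₃ - 2 * x₂ = 1 →
      1 ≤ C * (x₁ ^ 2 + x₃ ^ 2 - 2 * x₂ ^ 2) := by
    intro h0 h
    have : 1 / 2 ≤ x₁ ^ 2 + x₃ ^ 2 - 2 * x₂ ^ 2 := by
      have : x₁ = 1 + 2 * x₂ - x₃ := by linarith
      subst this
      nlinarith [sq_nonneg (1 + 2 * x₂ - x₃ - x₃)]
    nlinarith
  have hkcases : x₁ + x₃ - 2 * x₂ = 0 ∨ x₁ + x₃ - 2 * x₂ = 1 ∨ x₁ + x₃ - 2 * x₂ = -1 := by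
    have b : -2 < x₁ + x₃ - 2 * x₂ ∧ x₁ + x₃ - 2 * x₂ < 2 := by
      rcases h₁.cases hε.le with h | h <;> rcases h₂.cases hε.le with h' | h' <;>
      rcases h₃.cases hε.le with h'' | h'' <;> constructor <;> linarith [h.1, h.2.1, h'.1, h'.2.1, h''.1, h''.2.1]
    rw [hk] at b ⊢
    have h1' : -2 < k := by exact_mod_cast b.1
    have h2' : k < 2 := by exact_mod_cast b.2
    have : k = 0 ∨ k = 1 ∨ k = -1 := by omega
    rcases this with h | h | h <;> simp [h]
  unfold weight
  rcases hkcases with h0 | h0 | h0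
  · rcases h₁.cases hε.le with ⟨a₁, b₁, c₁, d₁, e₁, f₁⟩ | ⟨a₁, b₁, c₁, d₁, e₁, s₁, t₁, f₁⟩ <;>
    rcases h₂.cases hε.le with ⟨a₂, b₂, c₂, d₂, e₂, f₂⟩ | ⟨a₂, b₂, c₂, d₂, e₂, s₂, t₂, f₂⟩ <;>
    rcases h₃.cases hε.le with ⟨a₃, b₃, c₃, d₃, e₃, f₃⟩ | ⟨a₃, b₃, c₃, d₃, e₃, s₃, t₃, f₃⟩
    · right
      refine ⟨0, ?_, fun _ h => by simpa [sub_eq_zero] using h⟩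
      have := hpos l _ hl (by linarith) (by linarith)
      have hx : x₂ = (x₁ + x₃) / 2 := by linarith
      have hy : y₂ = (y₁ + y₃) / 2 := by linarith
      rw [f₁, f₂, f₃, hx, hy]; push_cast; ring
    · left; exact mixed _ _ _ (by linarith) (by linarith) (by linarith) (by linarith)
        (gap h0 (by rw [le_abs]; right; linarith))
    · exfalso; linarith
    · left; exact mixed _ _ _ (by linarith) (by linarith) (by linarith) (by linarith)
        (gap h0 (by rw [le_abs]; right; linarith))
    · left; exact mixed _ _ _ (by linarith) (by linarith) (by linarith) (by linarith)
        (gap h0 (by rw [le_abs]; left; linarith))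
    · exfalso; linarith
    · left; exact mixed _ _ _ (by linarith) (by linarith) (by linarith) (by linarith)
        (gap h0 (by rw [le_abs]; left; linarith))
    · right
      generalize foldedHeight x₁ y₁ = r₁ at *
      generalize foldedHeight x₂ y₂ = r₂ at *
      generalize foldedHeight x₃ y₃ = r₃ at *
      have hr := hpos (2 * l - s₁ - s₃ + 2 * s₂) (2 * (r₁ + r₃ - 2 * r₂))
        (by push_cast; linarith) (by linarith) (by linarith)
      refine ⟨s₃ - s₁, ?_, fun _ h => ?_⟩
      · have hx : x₂ = (x₁ + x₃) / 2 := by linarith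
        have hy : r₂ = (r₁ + r₃) / 2 := by linarith
        rw [hx, hy, f₁, f₃]; push_cast; ring
      · have hs : s₁ + s₃ = 2 * (l + s₂) := by
          have : (s₁ : ℝ) + s₃ = 2 * (l + s₂) := by linarith
          exact_mod_cast this
        have : s₁ = s₃ := by omega
        rw [this] at h
        push_cast at h
        linarith
  · left
    have : ∀ {x y}, InRegion ε x y → 0 ≤ foldedHeight x y ∧ foldedHeight x y ≤ 1 / 2 ∧ 0 ≤ x := by
      intro x y h
      rcases h.cases hε.le with ⟨a₁, b₁, c₁, d₁, e₁, f₁⟩ | ⟨a₁, b₁, c₁, d₁, e₁, s₁, t₁, f₁⟩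
      · rw [f₁]; exact ⟨c₁, d₁.le, a₁⟩
      · exact ⟨by linarith, d₁.le, by linarith⟩
    exact mixed _ _ _ (this h₁).1 (this h₂).1 (this h₂).2.1 (this h₃).1 (wrap (this h₂).2.2 h0)
  · exfalso
    rcases h₁.cases hε.le with ⟨a₁, b₁, c₁, d₁, e₁, f₁⟩ | ⟨a₁, b₁, c₁, d₁, e₁, s₁, t₁, f₁⟩ <;>
    rcases h₂.cases hε.le with ⟨a₂, b₂, c₂, d₂, e₂, f₂⟩ | ⟨a₂, b₂, c₂, d₂, e₂, s₂, t₂, f₂⟩ <;>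
    rcases h₃.cases hε.le with ⟨a₃, b₃, c₃, d₃, e₃, f₃⟩ | ⟨a₃, b₃, c₃, d₃, e₃, s₃, t₃, f₃⟩ <;>
    try linarith
    have := hpos (l + s₂) (y₁ + y₃ - 2 * foldedHeight x₂ y₂) (by push_cast; linarith)
      (by linarith) (by linarith)
    linarith

/-- Some translate of the grid `(1 / m) ℤ` samples `g` on `[0, 1)` at least as well as its mean. -/
lemma exists_shift_sum_ge {g : ℝ → ℝ} (hg : Integrable g) (m : ℕ) [NeZero m] :
    ∃ θ ∈ Ico (0 : ℝ) 1, m * ∫ x in (0 : ℝ)..1, g x ≤ ∑ a : ZMod m, g ((a.val + θ) / m) := by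
  have hm : (m : ℝ) ≠ 0 := NeZero.ne _
  have hsum : ∀ F : ℕ → ℝ, ∑ a : ZMod m, F a.val = ∑ b ∈ Finset.range m, F b := by
    intro F
    obtain ⟨k, rfl⟩ := Nat.exists_eq_succ_of_ne_zero (NeZero.ne m)
    exact Fin.sum_univ_eq_sum_range F (k + 1)
  have hform : ∀ b : ℕ, (fun θ : ℝ => g ((b + θ) / m)) = fun θ => g (θ / m + b / m) := by
    intro b; ext θ; congr 1; ring
  have hint : ∀ b : ℕ, Integrable (fun θ : ℝ => g ((b + θ) / m)) := by
    intro b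
    rw [hform]
    exact (hg.comp_add_right ((b : ℝ) / m)).comp_div hm
  obtain ⟨θ, hθ, h⟩ := exists_setAverage_le (μ := volume) (s := Ico (0 : ℝ) 1)
    (f := fun θ => ∑ b ∈ Finset.range m, g ((b + θ) / m)) (by simp) (by simp)
    (integrable_finsetSum _ fun b _ => hint b).integrableOn
  refine ⟨θ, hθ, ?_⟩
  rw [hsum fun b => g ((b + θ) / m)]
  refine le_trans (le_of_eq ?_) h
  rw [setAverage_eq, integral_Ico_eq_integral_Ioc,
    ← intervalIntegral.integral_of_le zero_le_one,
    intervalIntegral.integral_finsetSum fun b _ => (hint b).intervalIntegrable]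
  have hpiece : ∀ b : ℕ, ∫ θ in (0 : ℝ)..1, g ((b + θ) / m) =
      m * ∫ x in ((b : ℕ) / m : ℝ)..((b + 1 : ℕ) / m : ℝ), g x := by
    intro b
    rw [hform, intervalIntegral.integral_comp_div_add _ hm, smul_eq_mul]
    congr 2 <;> push_cast <;> ring
  simp only [hpiece]
  rw [← Finset.mul_sum, intervalIntegral.sum_integral_adjacent_intervals
    (a := fun b : ℕ => (b / m : ℝ)) fun _ _ => hg.intervalIntegrable]
  simp [hm]

lemma integral_indicator_Ico {g : ℝ → ℝ} {a b : ℝ} (ha : 0 ≤ a) (hab : a ≤ b) (hb : b ≤ 1) :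
    ∫ x in (0 : ℝ)..1, (Ico a b).indicator g x = ∫ x in a..b, g x := by
  rw [intervalIntegral.integral_of_le zero_le_one, ← integral_Ico_eq_integral_Ioc,
    setIntegral_indicator measurableSet_Ico, inter_eq_right.mpr (Ico_subset_Ico ha hb),
    integral_Ico_eq_integral_Ioc, ← intervalIntegral.integral_of_le hab]

lemma integrable_indicator_Ico {g : ℝ → ℝ} (hg : Continuous g) (a b : ℝ) :
    Integrable ((Ico a b).indicator g) := by
  rw [integrable_indicator_iff measurableSet_Ico]
  exact (hg.integrableOn_Icc (a := a) (b := b)).mono_set Ico_subset_Icc_self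

/-- The length of the fibre of the region over `x`. -/
noncomputable def fibreLength (ε x : ℝ) : ℝ :=
  (Ico 0 (1 / 2 - ε)).indicator lowerHeight x +
    (Ico (1 / 2) (3 / 4)).indicator (fun x => 2 * upperHeight x) x

lemma continuous_lowerHeight : Continuous lowerHeight := by unfold lowerHeight; fun_prop

lemma continuous_upperHeight : Continuous upperHeight := by unfold upperHeight; fun_prop

lemma integrable_fibreLength (ε : ℝ) : Integrable (fibreLength ε) :=
  (integrable_indicator_Ico continuous_lowerHeight _ _).add
    (integrable_indicator_Ico (continuous_const.mul continuous_upperHeight) _ _)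

lemma integral_fibreLength {ε : ℝ} (hε : 0 ≤ ε) (hε6 : ε ≤ 1 / 6) :
    ∫ x in (0 : ℝ)..1, fibreLength ε x = 7 / 24 - ε / 2 := by
  have hl := continuous_lowerHeight
  have hu : Continuous fun x => 2 * upperHeight x := continuous_const.mul continuous_upperHeight
  unfold fibreLength
  rw [intervalIntegral.integral_add (integrable_indicator_Ico hl _ _).intervalIntegrable
      (integrable_indicator_Ico hu _ _).intervalIntegrable,
    integral_indicator_Ico le_rfl (by linarith) (by linarith),
    integral_indicator_Ico (by norm_num) (by norm_num) (by norm_num),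
    ← intervalIntegral.integral_add_adjacent_intervals (b := 1 / 3)
      (hl.intervalIntegrable _ _) (hl.intervalIntegrable _ _),
    ← intervalIntegral.integral_add_adjacent_intervals (a := 1 / 2) (b := 7 / 12) (c := 3 / 4)
      (hu.intervalIntegrable _ _) (hu.intervalIntegrable _ _)]
  have e1 : ∫ x in (0 : ℝ)..(1 / 3), lowerHeight x = ∫ x in (0 : ℝ)..(1 / 3), (1 / 6 + x) := by
    refine intervalIntegral.integral_congr fun x hx => ?_
    rw [uIcc_of_le (by norm_num)] at hx
    exact min_eq_right (by linarith [hx.2])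
  have e2 : ∫ x in (1 / 3)..(1 / 2 - ε), lowerHeight x = ∫ x in (1 / 3)..(1 / 2 - ε), (1 / 2) := by
    refine intervalIntegral.integral_congr fun x hx => ?_
    rw [uIcc_of_le (by linarith)] at hx
    exact min_eq_left (by linarith [hx.1])
  have e3 : ∫ x in (1 / 2)..(7 / 12), 2 * upperHeight x = ∫ x in (1 / 2)..(7 / 12), (1 / 2) := by
    refine intervalIntegral.integral_congr fun x hx => ?_
    rw [uIcc_of_le (by norm_num)] at hx
    simp only [upperHeight]
    rw [min_eq_left (by linarith [hx.2])]; norm_num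
  have e4 : ∫ x in (7 / 12)..(3 / 4), 2 * upperHeight x =
      ∫ x in (7 / 12)..(3 / 4), (5 / 3 - 2 * x) := by
    refine intervalIntegral.integral_congr fun x hx => ?_
    rw [uIcc_of_le (by norm_num)] at hx
    simp only [upperHeight]
    rw [min_eq_right (by linarith [hx.1])]; ring
  rw [e1, e2, e3, e4, intervalIntegral.integral_add (by simp) (by simp),
    intervalIntegral.integral_sub (by simp)
      ((by fun_prop : Continuous fun x : ℝ => 2 * x).intervalIntegrable _ _),
    intervalIntegral.integral_const_mul]
  simp only [intervalIntegral.integral_const, integral_id, smul_eq_mul]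
  ring

open Classical in
/-- The indicator function of the fibre of the region over `x`. -/
noncomputable def fibreIndicator (ε x y : ℝ) : ℝ := if InRegion ε x y then 1 else 0

lemma fibreIndicator_integral {ε x : ℝ} (hε : 0 ≤ ε) :
    Integrable (fibreIndicator ε x) ∧
      ∫ y in (0 : ℝ)..1, fibreIndicator ε x y = fibreLength ε x := by
  by_cases hx : 0 ≤ x ∧ x < 1 / 2 - ε
  · have hf : fibreIndicator ε x = (Ico 0 (lowerHeight x)).indicator fun _ => 1 := by
      ext y
      simp only [fibreIndicator, InRegion, indicator, mem_Ico]
      congr 1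
      rw [eq_iff_iff]
      constructor
      · rintro (h | h)
        · exact h.2.2
        · linarith [h.1]
      · exact fun h => Or.inl ⟨hx.1, hx.2, h⟩
    have h0 : 0 ≤ lowerHeight x := le_min (by norm_num) (by linarith)
    have h1 : lowerHeight x ≤ 1 := (min_le_left _ _).trans (by norm_num)
    rw [hf]
    refine ⟨integrable_indicator_Ico continuous_const _ _, ?_⟩
    rw [integral_indicator_Ico le_rfl h0 h1, fibreLength, indicator_of_mem (mem_Ico.2 hx),
      indicator_of_notMem (by rw [mem_Ico]; intro h; linarith [h.1])]
    simp
  · by_cases hx' : 1 / 2 ≤ x ∧ x < 3 / 4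
    · have h0 : 0 ≤ upperHeight x := le_min (by norm_num) (by linarith)
      have h1 : upperHeight x ≤ 1 / 4 := min_le_left _ _
      have hf : fibreIndicator ε x =
          (Ico (1 / 2 - upperHeight x) (1 / 2)).indicator (fun _ => 1) +
            (Ico (1 - upperHeight x) 1).indicator fun _ => 1 := by
        ext y
        have hmem : InRegion ε x y ↔ y ∈ Ico (1 / 2 - upperHeight x) (1 / 2) ∨
            y ∈ Ico (1 - upperHeight x) 1 := by
          constructor
          · rintro (h | h)
            · exact absurd ⟨h.1, h.2.1⟩ hx
            · exact h.2.2
          · exact fun h => Or.inr ⟨hx'.1, hx'.2, h⟩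
        rw [Pi.add_apply, fibreIndicator]
        by_cases h : y ∈ Ico (1 / 2 - upperHeight x) (1 / 2)
        · have h' : y ∉ Ico (1 - upperHeight x) 1 := fun h' => by linarith [h.2, h'.1]
          rw [if_pos (hmem.2 (Or.inl h)), indicator_of_mem h, indicator_of_notMem h', add_zero]
        · rw [indicator_of_notMem h, zero_add]
          by_cases h' : y ∈ Ico (1 - upperHeight x) 1
          · rw [if_pos (hmem.2 (Or.inr h')), indicator_of_mem h']
          · rw [if_neg fun hr => (hmem.1 hr).elim h h', indicator_of_notMem h']
      have i1 := integrable_indicator_Ico (continuous_const (y := (1 : ℝ)))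
        (1 / 2 - upperHeight x) (1 / 2)
      have i2 := integrable_indicator_Ico (continuous_const (y := (1 : ℝ)))
        (1 - upperHeight x) 1
      rw [hf]
      refine ⟨i1.add i2, ?_⟩
      simp only [Pi.add_apply]
      rw [intervalIntegral.integral_add i1.intervalIntegrable i2.intervalIntegrable,
        integral_indicator_Ico (by linarith) (by linarith) (by linarith),
        integral_indicator_Ico (by linarith) (by linarith) (by linarith), fibreLength,
        indicator_of_mem (mem_Ico.2 hx'), indicator_of_notMem (by rwa [mem_Ico])]
      simp only [intervalIntegral.integral_const, smul_eq_mul]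
      ring
    · have hf : fibreIndicator ε x = fun _ => 0 := by
        ext y
        refine if_neg ?_
        rintro (h | h)
        · exact hx ⟨h.1, h.2.1⟩
        · exact hx' ⟨h.1, h.2.1⟩
      rw [hf]
      refine ⟨by simp, ?_⟩
      rw [fibreLength, indicator_of_notMem (by rwa [mem_Ico]), indicator_of_notMem (by rwa [mem_Ico])]
      simp

/-- Some translate of the grid meets the region in at least the expected number of points. -/
lemma exists_shift_region_card {ε : ℝ} (hε : 0 ≤ ε) (hε6 : ε ≤ 1 / 6) (m₁ m₂ : ℕ) [NeZero m₁]
    [NeZero m₂] : ∃ θ η : ℝ, ∃ S : Finset (ZMod m₁ × ZMod m₂),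
      (∀ p ∈ S, InRegion ε ((p.1.val + θ) / m₁) ((p.2.val + η) / m₂)) ∧
      (7 / 24 - ε / 2) * (m₁ * m₂) ≤ S.card := by
  classical
  obtain ⟨θ, -, hθ⟩ := exists_shift_sum_ge (integrable_fibreLength ε) m₁
  rw [integral_fibreLength hε hε6] at hθ
  have hI : ∀ x, Integrable (fibreIndicator ε x) := fun x => (fibreIndicator_integral hε).1
  obtain ⟨η, -, hη⟩ := exists_shift_sum_ge
    (g := fun y => ∑ a : ZMod m₁, fibreIndicator ε ((a.val + θ) / m₁) y)
    (integrable_finsetSum _ fun a _ => hI _) m₂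
  rw [intervalIntegral.integral_finsetSum fun a _ => (hI _).intervalIntegrable] at hη
  simp only [(fibreIndicator_integral hε).2] at hη
  refine ⟨θ, η, Finset.univ.filter fun p : ZMod m₁ × ZMod m₂ =>
    InRegion ε ((p.1.val + θ) / m₁) ((p.2.val + η) / m₂), fun p hp => (Finset.mem_filter.1 hp).2, ?_⟩
  have hcard : ∑ b : ZMod m₂, ∑ a : ZMod m₁,
      fibreIndicator ε ((a.val + θ) / m₁) ((b.val + η) / m₂) =
      ((Finset.univ.filter fun p : ZMod m₁ × ZMod m₂ =>
        InRegion ε ((p.1.val + θ) / m₁) ((p.2.val + η) / m₂)).card : ℝ) := by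
    rw [Finset.card_filter, Fintype.sum_prod_type_right]
    push_cast
    simp only [fibreIndicator]
  rw [← hcard]
  refine le_trans ?_ hη
  have : (0 : ℝ) ≤ m₂ := Nat.cast_nonneg _
  nlinarith [mul_le_mul_of_nonneg_left hθ this]

/-- `G` contains a set of at least `N` elements carrying a weight with values in `[0, B]` whose
second differences along progressions are nonnegative, and at least `g` if the end points of the
progression are distinct. -/
def HasConvexSet (G : Type*) [AddCommGroup G] (B g N : ℝ) : Prop :=
  ∃ (S : Finset G) (f : G → ℝ), (∀ x ∈ S, 0 ≤ f x ∧ f x ≤ B) ∧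
    (∀ x ∈ S, ∀ y ∈ S, ∀ z ∈ S, x + z = y + y →
      0 ≤ f x + f z - 2 * f y ∧ (x ≠ z → g ≤ f x + f z - 2 * f y)) ∧ N ≤ S.card

lemma HasConvexSet.prod {G H : Type*} [AddCommGroup G] [AddCommGroup H] {B B' g N N' : ℝ}
    (hN : 0 ≤ N) (hG : HasConvexSet G B g N) (hH : HasConvexSet H B' g N') :
    HasConvexSet (G × H) (B + B') g (N * N') := by
  obtain ⟨S, f, hf, hc, hS⟩ := hG
  obtain ⟨T, f', hf', hc', hT⟩ := hH
  refine ⟨S ×ˢ T, fun p => f p.1 + f' p.2, ?_, ?_, ?_⟩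
  · intro p hp
    obtain ⟨h1, h2⟩ := Finset.mem_product.1 hp
    exact ⟨add_nonneg (hf _ h1).1 (hf' _ h2).1, add_le_add (hf _ h1).2 (hf' _ h2).2⟩
  · intro x hx y hy z hz h
    obtain ⟨hx1, hx2⟩ := Finset.mem_product.1 hx
    obtain ⟨hy1, hy2⟩ := Finset.mem_product.1 hy
    obtain ⟨hz1, hz2⟩ := Finset.mem_product.1 hz
    have a := hc _ hx1 _ hy1 _ hz1 (congrArg Prod.fst h)
    have b := hc' _ hx2 _ hy2 _ hz2 (congrArg Prod.snd h)
    refine ⟨by linarith [a.1, b.1], fun hne => ?_⟩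
    by_cases h1 : x.1 = z.1
    · have h2 : x.2 ≠ z.2 := fun h2 => hne (Prod.ext h1 h2)
      linarith [a.1, b.2 h2]
    · linarith [b.1, a.2 h1]
  · rw [Finset.card_product]
    push_cast
    exact (mul_le_mul_of_nonneg_left hT hN).trans
      (mul_le_mul_of_nonneg_right hS (Nat.cast_nonneg _))

lemma HasConvexSet.congr {G H : Type*} [AddCommGroup G] [AddCommGroup H] {B g N : ℝ}
    (e : G ≃+ H) (hG : HasConvexSet G B g N) : HasConvexSet H B g N := by
  obtain ⟨S, f, hf, hc, hS⟩ := hG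
  refine ⟨S.map e.toEquiv.toEmbedding, fun x => f (e.symm x), ?_, ?_, by simpa using hS⟩
  · intro x hx
    obtain ⟨a, ha, rfl⟩ := Finset.mem_map.1 hx
    simpa using hf a ha
  · intro x hx y hy z hz h
    obtain ⟨a, ha, rfl⟩ := Finset.mem_map.1 hx
    obtain ⟨b, hb, rfl⟩ := Finset.mem_map.1 hy
    obtain ⟨c, hc', rfl⟩ := Finset.mem_map.1 hz
    have h' : a + c = b + b := e.injective (by simpa using h)
    simpa using hc a ha b hb c hc' h'

lemma HasConvexSet.mono {G : Type*} [AddCommGroup G] {B B' g N N' : ℝ} (hB : B ≤ B') (hN : N' ≤ N)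
    (hG : HasConvexSet G B g N) : HasConvexSet G B' g N' := by
  obtain ⟨S, f, hf, hc, hS⟩ := hG
  exact ⟨S, f, fun x hx => ⟨(hf x hx).1, (hf x hx).2.trans hB⟩, hc, hN.trans hS⟩

/-- Pigeonholing the values of the weight. -/
lemma HasConvexSet.le_r3 {G : Type*} [AddCommGroup G] [Finite G] {B g N : ℝ} (hB : 0 ≤ B)
    (hg : 0 < g) (hG : HasConvexSet G B g N) : N / (2 * B / g + 1) ≤ r3 G := by
  classical
  obtain ⟨S, f, hf, hc, hS⟩ := hG
  have hK : 0 ≤ 2 * B / g := by positivity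
  have hmaps : ∀ x ∈ S, ⌊2 * f x / g⌋₊ ∈ Finset.range (⌊2 * B / g⌋₊ + 1) := by
    intro x hx
    rw [Finset.mem_range, Nat.lt_succ_iff]
    refine Nat.floor_le_floor ?_
    have := (hf x hx).2
    gcongr
  have hcard : ((⌊2 * B / g⌋₊ : ℝ) + 1) ≤ 2 * B / g + 1 := by
    linarith [Nat.floor_le hK]
  obtain ⟨k, -, hk⟩ := Finset.exists_le_card_fiber_of_nsmul_le_card_of_maps_to
    (b := (S.card : ℝ) / (2 * B / g + 1)) hmaps (by simp) (by
      rw [Finset.card_range, nsmul_eq_mul, mul_div_assoc', div_le_iff₀ (by positivity)]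
      push_cast
      rw [mul_comm]
      gcongr)
  refine (div_le_div_of_nonneg_right hS (by positivity)).trans (hk.trans ?_)
  rw [Nat.cast_le]
  have : Fintype G := Fintype.ofFinite G
  refine le_csSup ⟨Fintype.card G, ?_⟩ ⟨_, ?_, rfl⟩
  · rintro _ ⟨A, -, rfl⟩
    exact A.card_le_univ
  · intro x hx y hy z hz _ _ hxz h
    obtain ⟨hx, ex⟩ := Finset.mem_filter.1 hx
    obtain ⟨hy, ey⟩ := Finset.mem_filter.1 hy
    obtain ⟨hz, ez⟩ := Finset.mem_filter.1 hz
    have hgap := (hc x hx y hy z hz h).2 hxz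
    have hpos : ∀ w ∈ S, 0 ≤ 2 * f w / g := fun w hw => by
      have := (hf w hw).1
      positivity
    have ux := (Nat.floor_eq_iff (hpos x hx)).1 ex
    have uy := (Nat.floor_eq_iff (hpos y hy)).1 ey
    have uz := (Nat.floor_eq_iff (hpos z hz)).1 ez
    have h2 : 2 * f x / g + 2 * f z / g - 2 * (2 * f y / g) < 2 := by linarith [ux.2, uy.1, uz.2]
    have h3 : 2 * f x / g + 2 * f z / g - 2 * (2 * f y / g) =
        2 * (f x + f z - 2 * f y) / g := by ring
    rw [h3, div_lt_iff₀ hg] at h2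
    linarith

/-- The point of the `θ`-translate of the grid `(1 / m) ℤ` in a period that represents `a`. -/
noncomputable def gridPoint {m : ℕ} (θ : ℝ) (a : ZMod m) : ℝ := (a.val + θ) / m

lemma gridPoint_progression {m : ℕ} [NeZero m] (θ : ℝ) {x y z : ZMod m} (h : x + z = y + y) :
    ∃ k : ℤ, gridPoint θ x + gridPoint θ z - 2 * gridPoint θ y = k := by
  have hm : (m : ℝ) ≠ 0 := NeZero.ne _
  have hd : (m : ℤ) ∣ (x.val + z.val - 2 * y.val : ℤ) := by
    rw [← ZMod.intCast_zmod_eq_zero_iff_dvd]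
    push_cast
    simp only [ZMod.natCast_val, ZMod.cast_id', id_eq]
    rw [h]; ring
  obtain ⟨k, hk⟩ := hd
  refine ⟨k, ?_⟩
  have hk' : (x.val + z.val - 2 * y.val : ℝ) = m * k := by exact_mod_cast hk
  unfold gridPoint
  field_simp
  linarith

lemma gridPoint_sub_sq {m M : ℕ} [NeZero m] (hM : m ≤ M) (θ : ℝ) (x z : ZMod m) (s : ℤ)
    (hne : gridPoint θ x - gridPoint θ z + s / 2 ≠ 0) :
    1 / (4 * (M : ℝ) ^ 2) ≤ (gridPoint θ x - gridPoint θ z + s / 2) ^ 2 := by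
  have hm : 0 < (m : ℝ) := Nat.cast_pos.2 (NeZero.pos m)
  have hMm : (m : ℝ) ≤ M := Nat.cast_le.2 hM
  have e : gridPoint θ x - gridPoint θ z + s / 2 =
      ((2 * x.val - 2 * z.val + m * s : ℤ) : ℝ) / (2 * m) := by
    unfold gridPoint
    push_cast
    field_simp
    ring
  rw [e] at hne ⊢
  have h0 : (2 * x.val - 2 * z.val + m * s : ℤ) ≠ 0 := by
    intro h
    rw [h] at hne
    simp at hne
  have h1 : (1 : ℝ) ≤ ((2 * x.val - 2 * z.val + m * s : ℤ) : ℝ) ^ 2 := by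
    have : (1 : ℤ) ≤ (2 * x.val - 2 * z.val + m * s : ℤ) ^ 2 := by
      have := sq_pos_of_ne_zero h0
      omega
    exact_mod_cast this
  rw [div_pow, show (2 * (m : ℝ)) ^ 2 = 4 * (m : ℝ) ^ 2 by ring]
  gcongr

lemma gridPoint_injective {m : ℕ} [NeZero m] (θ : ℝ) :
    Function.Injective (gridPoint θ : ZMod m → ℝ) := by
  intro x z h
  have hm : (m : ℝ) ≠ 0 := NeZero.ne _
  unfold gridPoint at h
  rw [div_left_inj' hm, add_left_inj, Nat.cast_inj] at h
  exact ZMod.val_injective m h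

lemma hasConvexSet_zmod {m M : ℕ} [NeZero m] (hM : m ≤ M) :
    HasConvexSet (ZMod m) 1 (1 / (8 * (M : ℝ) ^ 2)) (1 / 2 * m) := by
  classical
  obtain ⟨θ, -, hθ⟩ := exists_shift_sum_ge
    (integrable_indicator_Ico (continuous_const (y := (1 : ℝ))) 0 (1 / 2)) m
  rw [integral_indicator_Ico le_rfl (by norm_num) (by norm_num)] at hθ
  refine ⟨Finset.univ.filter fun a => gridPoint θ a ∈ Ico (0 : ℝ) (1 / 2),
    fun a => gridPoint θ a ^ 2, ?_, ?_, ?_⟩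
  · intro a ha
    have := (Finset.mem_filter.1 ha).2
    exact ⟨by positivity, pow_le_one₀ this.1 (by linarith [this.2])⟩
  · intro x hx y hy z hz h
    have hx := (Finset.mem_filter.1 hx).2
    have hy := (Finset.mem_filter.1 hy).2
    have hz := (Finset.mem_filter.1 hz).2
    obtain ⟨k, hk⟩ := gridPoint_progression θ h
    have hk0 : k = 0 := by
      have h1 : (-1 : ℝ) < k := by rw [← hk]; linarith [hx.1, hz.1, hy.2]
      have h2 : (k : ℝ) < 1 := by rw [← hk]; linarith [hx.2, hz.2, hy.1]
      have h1 : -1 < k := by exact_mod_cast h1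
      have h2 : k < 1 := by exact_mod_cast h2
      omega
    rw [hk0, Int.cast_zero] at hk
    have e : gridPoint θ x ^ 2 + gridPoint θ z ^ 2 - 2 * gridPoint θ y ^ 2 =
        1 / 2 * (gridPoint θ x - gridPoint θ z + (0 : ℤ) / 2) ^ 2 := by
      have : gridPoint θ y = (gridPoint θ x + gridPoint θ z) / 2 := by linarith
      rw [this]; push_cast; ring
    rw [e]
    refine ⟨by positivity, fun hne => ?_⟩
    have := gridPoint_sub_sq hM θ x z 0 (by
      simpa [sub_eq_zero] using (gridPoint_injective θ).ne hne)
    calc 1 / (8 * (M : ℝ) ^ 2) = 1 / 2 * (1 / (4 * (M : ℝ) ^ 2)) := by ring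
      _ ≤ _ := by gcongr
  · rw [Finset.card_filter]
    push_cast
    simp only [intervalIntegral.integral_const, smul_eq_mul, indicator] at hθ
    refine le_trans (le_of_eq ?_) hθ
    ring

lemma hasConvexSet_zmod_prod {m₁ m₂ M : ℕ} [NeZero m₁] [NeZero m₂] (hM₁ : m₁ ≤ M) (hM₂ : m₂ ≤ M)
    {ε C : ℝ} (hε : 0 < ε) (hε6 : ε ≤ 1 / 6) (hC : 2 ≤ C * ε ^ 2) (hC1 : 1 ≤ C) :
    HasConvexSet (ZMod m₁ × ZMod m₂) (C + 1) (1 / (8 * (M : ℝ) ^ 2))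
      ((7 / 24 - ε / 2) * (m₁ * m₂)) := by
  obtain ⟨θ, η, S, hS, hcard⟩ := exists_shift_region_card hε.le hε6 m₁ m₂
  refine ⟨S, fun p => weight C (gridPoint θ p.1) (gridPoint η p.2), ?_, ?_, hcard⟩
  · exact fun p hp => (hS p hp).weight_mem hε.le (by linarith)
  · intro x hx y hy z hz h
    obtain ⟨k, hk⟩ := gridPoint_progression θ (congrArg Prod.fst h)
    obtain ⟨l, hl⟩ := gridPoint_progression η (congrArg Prod.snd h)
    have hM : (1 : ℝ) ≤ M := Nat.one_le_cast.2 ((NeZero.pos m₁).trans_le hM₁)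
    have hMsq : 1 ≤ (M : ℝ) ^ 2 := one_le_pow₀ hM
    have hg : 1 / (8 * (M : ℝ) ^ 2) ≤ 1 / 8 :=
      one_div_le_one_div_of_le (by norm_num) (by linarith)
    have hhalf : 1 / (8 * (M : ℝ) ^ 2) = 1 / 2 * (1 / (4 * (M : ℝ) ^ 2)) := by ring
    rcases weight_progression hε hε6 hC (hS x hx) (hS y hy) (hS z hz) hk hl with hw | ⟨s, hw, hs⟩
    · exact ⟨le_trans (by norm_num) hw, fun _ => hg.trans hw⟩
    · change weight C (gridPoint θ x.1) (gridPoint η x.2) +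
        weight C (gridPoint θ z.1) (gridPoint η z.2) -
        2 * weight C (gridPoint θ y.1) (gridPoint η y.2) =
        C / 2 * (gridPoint θ x.1 - gridPoint θ z.1) ^ 2 +
          1 / 2 * (gridPoint η x.2 - gridPoint η z.2 + s / 2) ^ 2 at hw
      simp only [hw]
      refine ⟨by positivity, fun hne => ?_⟩
      rw [hhalf]
      by_cases h1 : x.1 = z.1
      · have h2 : gridPoint η x.2 - gridPoint η z.2 + s / 2 ≠ 0 := fun h0 =>
          hne (Prod.ext h1 (gridPoint_injective η (hs (congrArg (gridPoint θ) h1) h0)))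
        have := gridPoint_sub_sq hM₂ η x.2 z.2 s h2
        have : 0 ≤ C / 2 * (gridPoint θ x.1 - gridPoint θ z.1) ^ 2 := by positivity
        linarith
      · have h2 : gridPoint θ x.1 - gridPoint θ z.1 + (0 : ℤ) / 2 ≠ 0 := by
          simpa [sub_eq_zero] using (gridPoint_injective θ).ne h1
        have := gridPoint_sub_sq hM₁ θ x.1 z.1 0 h2
        rw [Int.cast_zero, zero_div, add_zero] at this
        have : 0 ≤ 1 / 2 * (gridPoint η x.2 - gridPoint η z.2 + s / 2) ^ 2 := by positivity
        nlinarith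

lemma hasConvexSet_pi_zmod {M : ℕ} {ε C : ℝ} (hε : 0 < ε) (hε6 : ε ≤ 1 / 6) (hC : 2 ≤ C * ε ^ 2)
    (hC1 : 1 ≤ C) (n : ℕ) : ∀ m : Fin n → ℕ, (∀ i, 2 ≤ m i ∧ m i ≤ M) →
    HasConvexSet (∀ i, ZMod (m i)) (n * (C + 1)) (1 / (8 * (M : ℝ) ^ 2))
      ((7 / 24 - ε / 2) ^ (n / 2) * (1 / 2) ^ (n % 2) * ∏ i, (m i : ℝ)) := by
  induction n using Nat.twoStepInduction with
  | zero =>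
    intro m _
    refine ⟨{0}, 0, by simp, ?_, by simp⟩
    intro x _ y _ z _ _
    exact ⟨by simp, fun h => absurd (Subsingleton.elim x z) h⟩
  | one =>
    intro m hm
    have : NeZero (m 0) := ⟨by have := (hm 0).1; omega⟩
    refine HasConvexSet.mono (by push_cast; linarith) (by simp)
      ((hasConvexSet_zmod (hm 0).2).congr (LinearEquiv.piUnique ℤ fun i => ZMod (m i)).symm.toAddEquiv)
  | more n ih _ =>
    intro m hm
    have : NeZero (m 0) := ⟨by have := (hm 0).1; omega⟩
    have : NeZero (m 1) := ⟨by have := (hm 1).1; omega⟩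
    have h01 := hasConvexSet_zmod_prod (hm 0).2 (hm 1).2 hε hε6 hC hC1
    have htail := ih (fun i => m i.succ.succ) fun i => hm _
    have e : ((ZMod (m 0) × ZMod (m 1)) × ∀ i : Fin n, ZMod (m i.succ.succ)) ≃+
        ∀ i : Fin (n + 2), ZMod (m i) :=
      AddEquiv.prodAssoc.trans <|
        ((AddEquiv.refl (ZMod (m 0))).prodCongr
          (Fin.consLinearEquiv ℤ fun i : Fin (n + 1) => ZMod (m i.succ)).toAddEquiv).trans
          (Fin.consLinearEquiv ℤ fun i => ZMod (m i)).toAddEquiv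
    have hp := (h01.prod (mul_nonneg (by linarith) (by positivity)) htail).congr e
    refine hp.mono (by push_cast; linarith) (le_of_eq ?_)
    rw [Fin.prod_univ_succ, Fin.prod_univ_succ, Nat.add_div_right _ two_pos, Nat.add_mod_right,
      pow_succ]
    simp only [Fin.succ_zero_eq_one]
    ring

/-- The density lost by opening a gap of width `1 / (6 * n)` in each pair of coordinates. -/
lemma density_lower_bound {n : ℕ} (hn : 0 < n) :
    3 / 7 * (7 / 24 : ℝ) ^ ((n : ℝ) / 2) ≤
      (7 / 24 - 1 / (6 * n) / 2 : ℝ) ^ (n / 2) * (1 / 2) ^ (n % 2) := by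
  have hn' : (1 : ℝ) ≤ n := Nat.one_le_cast.2 hn
  have e : (7 / 24 - 1 / (6 * n) / 2 : ℝ) = 7 / 24 * (1 + -(2 / (7 * n))) := by
    field_simp; ring
  have hb : (6 / 7 : ℝ) ≤ (1 + -(2 / (7 * n))) ^ (n / 2) := by
    have h2 : 2 / (7 * n : ℝ) ≤ 2 := by
      rw [div_le_iff₀ (by positivity)]; linarith
    refine le_trans ?_ (one_add_mul_le_pow (by linarith) _)
    have hk : ((n / 2 : ℕ) : ℝ) ≤ n / 2 := Nat.cast_div_le
    have : ((n / 2 : ℕ) : ℝ) * (2 / (7 * n)) ≤ n / 2 * (2 / (7 * n)) := by gcongr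
    have : (n : ℝ) / 2 * (2 / (7 * n)) = 1 / 7 := by field_simp
    linarith
  have hr : (7 / 24 : ℝ) ^ ((n : ℝ) / 2) ≤ (7 / 24) ^ (n / 2) := by
    rw [← Real.rpow_natCast]
    exact Real.rpow_le_rpow_of_exponent_ge (by norm_num) (by norm_num) Nat.cast_div_le
  have hh : (1 / 2 : ℝ) ≤ (1 / 2) ^ (n % 2) := by
    rcases Nat.mod_two_eq_zero_or_one n with h | h <;> rw [h] <;> norm_num
  rw [e, mul_pow]
  calc 3 / 7 * (7 / 24 : ℝ) ^ ((n : ℝ) / 2) ≤ 3 / 7 * (7 / 24) ^ (n / 2) := by gcongr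
    _ = (7 / 24) ^ (n / 2) * (6 / 7) * (1 / 2) := by ring
    _ ≤ _ := by gcongr

theorem stmt_19 (n : ℕ) (hn : 0 < n) (m : Fin n → ℕ) (M : ℕ)
    (hm : ∀ i, 2 ≤ m i ∧ m i ≤ M) :
    (r3 (∀ i : Fin n, ZMod (m i)) : ℝ) ≥
      (7/24 : ℝ) ^ ((n : ℝ)/2) / (10^6 * (M:ℝ)^2 * (n:ℝ)^3) * ∏ i, (m i : ℝ) := by
  have hn' : (1 : ℝ) ≤ n := Nat.one_le_cast.2 hn
  have hM : (1 : ℝ) ≤ M := Nat.one_le_cast.2 (by have := hm ⟨0, hn⟩; omega)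
  have : ∀ i, NeZero (m i) := fun i => ⟨by have := (hm i).1; omega⟩
  have hn2 : (1 : ℝ) ≤ (n : ℝ) ^ 2 := one_le_pow₀ hn'
  have hG := hasConvexSet_pi_zmod (ε := 1 / (6 * n)) (C := 72 * (n : ℝ) ^ 2) (by positivity)
    (one_div_le_one_div_of_le (by norm_num) (by linarith)) (by field_simp; norm_num)
    (by linarith) n m hm
  refine le_trans ?_ (hG.le_r3 (by positivity) (by positivity))
  have hden : 2 * (n * (72 * (n : ℝ) ^ 2 + 1)) / (1 / (8 * (M : ℝ) ^ 2)) + 1 ≤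
      3 / 7 * (10 ^ 6 * (M : ℝ) ^ 2 * (n : ℝ) ^ 3) := by
    have hM2 : (1 : ℝ) ≤ (M : ℝ) ^ 2 := one_le_pow₀ hM
    have hn3 : (n : ℝ) ≤ (n : ℝ) ^ 3 := by nlinarith
    have hMn : (1 : ℝ) ≤ (M : ℝ) ^ 2 * (n : ℝ) ^ 3 := one_le_mul_of_one_le_of_one_le hM2 (by linarith)
    have : (M : ℝ) ^ 2 * n ≤ (M : ℝ) ^ 2 * (n : ℝ) ^ 3 := by gcongr
    rw [div_div_eq_mul_div, div_one]
    nlinarith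
  have hP : (0 : ℝ) ≤ ∏ i, (m i : ℝ) := Finset.prod_nonneg fun i _ => Nat.cast_nonneg _
  calc (7 / 24 : ℝ) ^ ((n : ℝ) / 2) / (10 ^ 6 * (M : ℝ) ^ 2 * (n : ℝ) ^ 3) * ∏ i, (m i : ℝ)
      = 3 / 7 * (7 / 24 : ℝ) ^ ((n : ℝ) / 2) * (∏ i, (m i : ℝ)) /
          (3 / 7 * (10 ^ 6 * (M : ℝ) ^ 2 * (n : ℝ) ^ 3)) := by field_simp
    _ ≤ 3 / 7 * (7 / 24 : ℝ) ^ ((n : ℝ) / 2) * (∏ i, (m i : ℝ)) /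
          (2 * (n * (72 * (n : ℝ) ^ 2 + 1)) / (1 / (8 * (M : ℝ) ^ 2)) + 1) := by
        gcongr
    _ ≤ _ := div_le_div_of_nonneg_right
        (mul_le_mul_of_nonneg_right (density_lower_bound hn) hP) (by positivity)
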